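/- The composite AW ∘ sh equals the identity on N(A)⊗N(B) for any simplicial k-modules A and B (using normalized chains). -/

import Mathlib

open scoped TensorProduct Classical

/-- A simplicial `K`-module, given by `K`-modules `X n` together with face maps
`d n i : X (n+1) → X n` and degeneracy maps `s n i : X n → X (n+1)` (indices are natural
numbers; only indices in the simplicial range are constrained) satisfying the simplicial
identities. -/
structure SimplicialModule (K : Type*) [CommRing K] where
  X : ℕ → Type*
  [acg : ∀ n, AddCommGroup (X n)]
  [mod : ∀ n, Module K (X n)]
  d : ∀ n, ℕ → (X (n + 1) →ₗ[K] X n)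
  s : ∀ n, ℕ → (X n →ₗ[K] X (n + 1))
  d_d : ∀ n i j, i < j → j ≤ n + 2 →
    (d n i).comp (d (n + 1) j) = (d n (j - 1)).comp (d (n + 1) i)
  d_s_lt : ∀ n i j, i < j → j ≤ n + 1 →
    (d (n + 1) i).comp (s (n + 1) j) = (s n (j - 1)).comp (d n i)
  d_s_self : ∀ n j, j ≤ n →
    (d n j).comp (s n j) = LinearMap.id ∧ (d n (j + 1)).comp (s n j) = LinearMap.id
  d_s_gt : ∀ n i j, j + 1 < i → i ≤ n + 2 →
    (d (n + 1) i).comp (s (n + 1) j) = (s n j).comp (d n (i - 1))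
  s_s : ∀ n i j, i ≤ j → j ≤ n →
    (s (n + 1) i).comp (s n j) = (s (n + 1) (j + 1)).comp (s n i)

attribute [instance] SimplicialModule.acg SimplicialModule.mod

variable {K : Type*} [CommRing K]

/-- Transport along an equality of degrees. -/
def castE (S : SimplicialModule K) {a b : ℕ} (h : a = b) : S.X a → S.X b := fun x => h ▸ x

/-- `sIter S f m n : X n → X (n+m)` applies degeneracies `s_{f 0}, s_{f 1}, …, s_{f (m-1)}`
in this order (so `s_{f 0}` is applied first, at degree `n`). -/
def sIter (S : SimplicialModule K) (f : ℕ → ℕ) : ∀ (m n : ℕ), S.X n → S.X (n + m)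
  | 0, _, x => x
  | m + 1, n, x => S.s (n + m) (f m) (sIter S f m n x)

/-- `σ` is a `(p,q)`-shuffle (0-indexed). -/
def IsShuffle (p q : ℕ) (σ : Equiv.Perm (Fin (p + q))) : Prop :=
  (∀ i j : Fin (p + q), (i : ℕ) < j → (j : ℕ) < p → σ i < σ j) ∧
  (∀ i j : Fin (p + q), (i : ℕ) < j → p ≤ (i : ℕ) → σ i < σ j)

/-- A permutation of `Fin m` as a function `ℕ → ℕ` (junk value `0` out of range). -/
def permFun {m : ℕ} (σ : Equiv.Perm (Fin m)) : ℕ → ℕ :=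
  fun t => if h : t < m then (σ ⟨t, h⟩ : ℕ) else 0


/-- `dl S c n : X (n+c) → X n`, the composite `d̃_n^{n+c} = d_{n+1} ∘ ⋯ ∘ d_{n+c}` of
iterated last-face maps. -/
def dl (S : SimplicialModule K) : ∀ (c n : ℕ), S.X (n + c) → S.X n
  | 0, _, x => x
  | c + 1, n, x => dl S c n (S.d (n + c) (n + c + 1) x)

/-- `d0 S t n : X (n+t) → X n`, the `t`-fold iterate `d_0^t` of the zeroth face map. -/
def d0 (S : SimplicialModule K) : ∀ (t n : ℕ), S.X (n + t) → S.X n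
  | 0, _, x => x
  | t + 1, n, x => d0 S t n (S.d (n + t) 0 x)

/-- The submodule of degenerate elements: in positive degree the span of the images of
the degeneracy maps, in degree `0` the zero submodule.  The normalized Moore complex has
`N(A)_n = A_n / degSub A n`. -/
def degSub (S : SimplicialModule K) : ∀ n, Submodule K (S.X n)
  | 0 => ⊥
  | m + 1 => ⨆ i ∈ Finset.range (m + 1), LinearMap.range (S.s m i)

/-- The `(i,j)`-component (for `i + j = p + q`) of `AW(sh(a ⊗ b))` in `A_i ⊗ B_j`, for
`a ∈ A_p`, `b ∈ B_q`: `AW` applied in degree `p+q` to the shuffle sum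
`sh(a ⊗ b) = Σ_σ sgn(σ) (s…a) ⊗ (s…b)`. -/
noncomputable def awShComp (A B : SimplicialModule K) (p q i j : ℕ)
    (a : A.X p) (b : B.X q) (h1 : p + q = i + j) (h2 : q + p = j + i) :
    TensorProduct K (A.X i) (B.X j) :=
  ∑ σ : Equiv.Perm (Fin (p + q)),
    if IsShuffle p q σ then
      ((Equiv.Perm.sign σ : ℤˣ) : ℤ) •
        ((dl A j i (castE A h1 (sIter A (fun t => permFun σ (p + t)) q p a))) ⊗ₜ[K]
          (d0 B i j (castE B h2 (sIter B (permFun σ) p q b))))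
    else 0

/-!
In the shuffle term of `σ`, the degeneracies applied to `a` have indices `σ p < ⋯ < σ (p + q - 1)`
and those applied to `b` have indices `σ 0 < ⋯ < σ (p - 1)`.

The smallest degeneracy `s_{σ p}` can be moved to the outside of the `A`-factor, and then commutes
with the last faces as long as its index is less than the target degree `i`; so the `A`-factor is
degenerate when `σ p < i`. The outermost degeneracy of the `B`-factor is `s_{σ (p - 1)}`, and each
`d_0` lowers its index by one; so the `B`-factor is degenerate when `i ≤ σ (p - 1)`. A term
surviving normalization thus satisfies `σ (p - 1) < i ≤ σ p`, which forces `σ = 1` and `i = p`.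
For `σ = 1` the faces cancel the degeneracies one by one.
-/

section PermFun

variable {m k : ℕ}

lemma permFun_of_lt (σ : Equiv.Perm (Fin m)) (hk : k < m) : permFun σ k = σ ⟨k, hk⟩ :=
  dif_pos hk

lemma permFun_val (σ : Equiv.Perm (Fin m)) (k : Fin m) : permFun σ k = σ k :=
  permFun_of_lt σ k.isLt

lemma permFun_lt (σ : Equiv.Perm (Fin m)) (hk : k < m) : permFun σ k < m := by
  rw [permFun_of_lt σ hk]
  exact (σ _).isLt

lemma permFun_one (hk : k < m) : permFun (1 : Equiv.Perm (Fin m)) k = k :=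
  permFun_of_lt 1 hk

end PermFun

lemma isShuffle_one (p q : ℕ) : IsShuffle p q 1 :=
  ⟨fun _ _ hkl _ => hkl, fun _ _ hkl _ => hkl⟩

namespace IsShuffle

variable {p q : ℕ} {σ : Equiv.Perm (Fin (p + q))}

lemma strictMonoOn_permFun_left (hσ : IsShuffle p q σ) :
    StrictMonoOn (permFun σ) (Set.Iio p) := fun k hk l hl hkl => by
  rw [Set.mem_Iio] at hk hl
  rw [permFun_of_lt σ (by omega : k < p + q), permFun_of_lt σ (by omega : l < p + q)]
  exact hσ.1 _ _ hkl hl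

lemma strictMonoOn_permFun_right (hσ : IsShuffle p q σ) :
    StrictMonoOn (permFun σ) (Set.Ico p (p + q)) := fun k hk l hl hkl => by
  rw [permFun_of_lt σ hk.2, permFun_of_lt σ hl.2]
  exact hσ.2 _ _ hkl hk.1

lemma permFun_le_self (hσ : IsShuffle p q σ) {k : ℕ} (hk : k ∈ Set.Ico p (p + q)) :
    permFun σ k ≤ k := by
  have : NeZero (p + q) := ⟨by have := hk.2; omega⟩
  have hmono : StrictMonoOn σ (Set.Ici ⟨p, hk.1.trans_lt hk.2⟩) :=
    fun x hx y _ hxy => hσ.2 x y hxy hx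
  rw [permFun_of_lt σ hk.2]
  exact hmono.Ici_le_id ⟨k, hk.2⟩ hk.1

lemma eq_one_of_permFun_lt (hσ : IsShuffle p q σ)
    (hlt : 0 < p → 0 < q → permFun σ (p - 1) < permFun σ p) : σ = 1 := by
  have hmono : StrictMono σ := fun k l hkl => by
    by_cases hl : (l : ℕ) < p
    · exact hσ.1 k l hkl hl
    by_cases hk : p ≤ (k : ℕ)
    · exact hσ.2 k l hkl hk
    rw [Fin.lt_def, ← permFun_val, ← permFun_val]
    calc permFun σ k ≤ permFun σ (p - 1) :=
          hσ.strictMonoOn_permFun_left.monotoneOn (Set.mem_Iio.2 (by omega))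
            (Set.mem_Iio.2 (by omega)) (by omega)
      _ < permFun σ p := hlt (by omega) (by omega)
      _ ≤ permFun σ l :=
          hσ.strictMonoOn_permFun_right.monotoneOn ⟨le_rfl, by omega⟩ ⟨by omega, l.isLt⟩ (by omega)
  exact DFunLike.coe_injective <| (hmono.range_inj strictMono_id).1 <| by
    rw [σ.surjective.range_eq, Set.range_id]

end IsShuffle

namespace SimplicialModule

variable (S : SimplicialModule K) {n i j : ℕ}

lemma d_s_succ_apply (hij : i ≤ j) (hj : j ≤ n) (x : S.X (n + 1)) :
    S.d (n + 1) i (S.s (n + 1) (j + 1) x) = S.s n j (S.d n i x) :=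
  LinearMap.congr_fun (S.d_s_lt n i (j + 1) (by omega) (by omega)) x

lemma d_succ_s_apply (hji : j < i) (hi : i ≤ n + 1) (x : S.X (n + 1)) :
    S.d (n + 1) (i + 1) (S.s (n + 1) j x) = S.s n j (S.d n i x) :=
  LinearMap.congr_fun (S.d_s_gt n (i + 1) j (by omega) (by omega)) x

lemma d_s_self_apply (hj : j ≤ n) (x : S.X n) : S.d n j (S.s n j x) = x :=
  LinearMap.congr_fun (S.d_s_self n j hj).1 x

lemma d_succ_s_self_apply (hj : j ≤ n) (x : S.X n) : S.d n (j + 1) (S.s n j x) = x :=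
  LinearMap.congr_fun (S.d_s_self n j hj).2 x

lemma s_succ_s_apply (hij : i ≤ j) (hj : j ≤ n) (x : S.X n) :
    S.s (n + 1) (j + 1) (S.s n i x) = S.s (n + 1) i (S.s n j x) :=
  (LinearMap.congr_fun (S.s_s n i j hij hj) x).symm

end SimplicialModule

section Cancellation

variable (S : SimplicialModule K) {f : ℕ → ℕ} {m n : ℕ}

lemma dl_sIter_of_eq_add (hf : ∀ k < m, f k = n + k) (x : S.X n) :
    dl S m n (sIter S f m n x) = x := by
  induction m with
  | zero => rfl
  | succ m ih =>
    rw [sIter, dl, hf m m.lt_succ_self, S.d_succ_s_self_apply le_rfl]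
    exact ih fun k hk => hf k (by omega)

lemma d_zero_sIter_of_eq_self (hf : ∀ k < m + 1, f k = k) (x : S.X n) :
    S.d (n + m) 0 (sIter S f (m + 1) n x) = sIter S f m n x := by
  induction m with
  | zero =>
    calc S.d n 0 (S.s n (f 0) x) = S.d n 0 (S.s n 0 x) := by rw [hf 0 one_pos]
      _ = x := S.d_s_self_apply n.zero_le x
  | succ m ih =>
    have hd : S.d (n + m) 0 (sIter S f (m + 1) n x) = sIter S f m n x :=
      ih fun k hk => hf k (by omega)
    calc S.d (n + m + 1) 0 (S.s (n + m + 1) (f (m + 1)) (sIter S f (m + 1) n x))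
        = S.s (n + m) m (S.d (n + m) 0 (sIter S f (m + 1) n x)) := by
          rw [hf (m + 1) (by omega)]
          exact S.d_s_succ_apply m.zero_le (by omega) _
      _ = sIter S f (m + 1) n x := by rw [hd, sIter, hf m (by omega)]

lemma d0_sIter_of_eq_self (hf : ∀ k < m, f k = k) (x : S.X n) :
    d0 S m n (sIter S f m n x) = x := by
  induction m with
  | zero => rfl
  | succ m ih =>
    rw [d0, d_zero_sIter_of_eq_self S hf]
    exact ih fun k hk => hf k (by omega)

end Cancellation

/-- `IsDegen S t n x`: the element `x : X n` is degenerate, witnessed by the single degeneracy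
`s_t` with `t` in the simplicial range. An inductive family, so that the degree `n` is not required
to be syntactically a successor. -/
inductive IsDegen (S : SimplicialModule K) : ℕ → ∀ n, S.X n → Prop
  | mk (n t : ℕ) (y : S.X n) (ht : t ≤ n) : IsDegen S t (n + 1) (S.s n t y)

section IsDegen

variable {S : SimplicialModule K} {t n : ℕ}

lemma IsDegen.mem_degSub {x : S.X n} (h : IsDegen S t n x) : x ∈ degSub S n := by
  obtain ⟨n, t, y, ht⟩ := h
  exact Submodule.mem_iSup_of_mem t <| Submodule.mem_iSup_of_mem
    (Finset.mem_range.2 (Nat.lt_succ_of_le ht)) ⟨y, rfl⟩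

lemma IsDegen.mkQ_eq_zero {x : S.X n} (h : IsDegen S t n x) : (degSub S n).mkQ x = 0 :=
  (Submodule.Quotient.mk_eq_zero _).2 h.mem_degSub

lemma IsDegen.castE {m : ℕ} {x : S.X n} (h : IsDegen S t n x) (hnm : n = m) :
    IsDegen S t m (castE S hnm x) := by
  subst hnm
  exact h

lemma IsDegen.s {x : S.X n} {u : ℕ} (h : IsDegen S t n x) (htu : t < u) (hu : u ≤ n) :
    IsDegen S t (n + 1) (S.s n u x) := by
  obtain ⟨_, t, _, ht⟩ := h
  obtain _ | u := u
  · omega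
  rw [S.s_succ_s_apply (by omega) (by omega)]
  exact .mk _ t _ (by omega)

lemma IsDegen.d_last {x : S.X (n + 1)} (h : IsDegen S t (n + 1) x) (ht : t < n) :
    IsDegen S t n (S.d n (n + 1) x) := by
  cases h with
  | mk _ _ _ _ =>
    obtain _ | n := n
    · omega
    rw [S.d_succ_s_apply ht le_rfl]
    exact .mk n t _ (by omega)

lemma IsDegen.d_zero {x : S.X (n + 1)} (h : IsDegen S (t + 1) (n + 1) x) :
    IsDegen S t n (S.d n 0 x) := by
  cases h with
  | mk _ _ _ ht =>
    obtain _ | n := n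
    · omega
    rw [S.d_s_succ_apply t.zero_le (by omega)]
    exact .mk n t _ (by omega)

lemma IsDegen.dl {c : ℕ} {x : S.X (n + c)} (h : IsDegen S t (n + c) x) (ht : t < n) :
    IsDegen S t n (dl S c n x) := by
  induction c with
  | zero => exact h
  | succ c ih => exact ih (h.d_last (n := n + c) (by omega))

lemma IsDegen.d0 {c : ℕ} {x : S.X (n + c)} (h : IsDegen S (t + c) (n + c) x) :
    IsDegen S t n (d0 S c n x) := by
  induction c with
  | zero => exact h
  | succ c ih => exact ih (h.d_zero (n := n + c))

lemma isDegen_sIter_last {f : ℕ → ℕ} {m : ℕ} (hf : f m ≤ n + m) (x : S.X n) :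
    IsDegen S (f m) (n + (m + 1)) (sIter S f (m + 1) n x) :=
  .mk _ _ _ hf

lemma isDegen_sIter_first {f : ℕ → ℕ} {m : ℕ} (hlt : ∀ k, 0 < k → k < m + 1 → f 0 < f k)
    (hle : ∀ k < m + 1, f k ≤ n + k) (x : S.X n) :
    IsDegen S (f 0) (n + (m + 1)) (sIter S f (m + 1) n x) := by
  induction m with
  | zero => exact isDegen_sIter_last (hle 0 one_pos) x
  | succ m ih =>
    have hm := ih (fun k h0 hk => hlt k h0 (by omega)) fun k hk => hle k (by omega)
    exact hm.s (hlt (m + 1) (by omega) (by omega)) (hle (m + 1) (by omega))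

end IsDegen

section ShuffleTerm

variable (A B : SimplicialModule K) {p q i j : ℕ} {σ : Equiv.Perm (Fin (p + q))}

/-- The `A`-factor in `A_i` of the `(i,j)`-component of `AW` applied to the term of `sh(a ⊗ b)`
indexed by `σ`. -/
def awShLeft (h : p + q = i + j) (σ : Equiv.Perm (Fin (p + q))) (a : A.X p) : A.X i :=
  dl A j i (castE A h (sIter A (fun t => permFun σ (p + t)) q p a))

/-- The `B`-factor in `B_j` of the `(i,j)`-component of `AW` applied to the term of `sh(a ⊗ b)`
indexed by `σ`. -/
def awShRight (h : q + p = j + i) (σ : Equiv.Perm (Fin (p + q))) (b : B.X q) : B.X j :=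
  d0 B i j (castE B h (sIter B (permFun σ) p q b))

lemma awShLeft_one (h : p + q = p + q) (a : A.X p) : awShLeft A h 1 a = a :=
  dl_sIter_of_eq_add A (fun _ _ => permFun_one (by omega)) a

lemma awShRight_one (h : q + p = q + p) (b : B.X q) :
    awShRight B h (1 : Equiv.Perm (Fin (p + q))) b = b :=
  d0_sIter_of_eq_self B (fun _ _ => permFun_one (by omega)) b

lemma isDegen_awShLeft (h : p + q = i + j) (hσ : IsShuffle p q σ) (hq : 0 < q)
    (hi : permFun σ p < i) (a : A.X p) : IsDegen A (permFun σ p) i (awShLeft A h σ a) := by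
  obtain ⟨m, rfl⟩ := Nat.exists_eq_succ_of_ne_zero hq.ne'
  have hs := isDegen_sIter_first (f := fun t => permFun σ (p + t)) (m := m)
    (fun k hk hkm => hσ.strictMonoOn_permFun_right ⟨le_rfl, by omega⟩
      ⟨by omega, by omega⟩ (by omega))
    (fun k hk => hσ.permFun_le_self ⟨by omega, by omega⟩) a
  exact (hs.castE h).dl hi

lemma isDegen_awShRight (h : q + p = j + i) (σ : Equiv.Perm (Fin (p + q))) (hp : 0 < p)
    (hi : i ≤ permFun σ (p - 1)) (b : B.X q) :
    IsDegen B (permFun σ (p - 1) - i) j (awShRight B h σ b) := by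
  obtain ⟨m, rfl⟩ := Nat.exists_eq_succ_of_ne_zero hp.ne'
  have hlt : permFun σ m < m + 1 + q := permFun_lt σ (by omega)
  have hs := isDegen_sIter_last (f := permFun σ) (m := m) (by omega) b
  refine IsDegen.d0 ?_
  rw [Nat.sub_add_cancel hi]
  exact hs.castE h

lemma mkQ_awShLeft_tmul_mkQ_awShRight_eq_zero (h₁ : p + q = i + j) (h₂ : q + p = j + i)
    (hσ : IsShuffle p q σ) (hne : ¬(i = p ∧ σ = 1)) (a : A.X p) (b : B.X q) :
    (degSub A i).mkQ (awShLeft A h₁ σ a) ⊗ₜ[K] (degSub B j).mkQ (awShRight B h₂ σ b) = 0 := by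
  by_cases hA : 0 < q ∧ permFun σ p < i
  · rw [(isDegen_awShLeft A h₁ hσ hA.1 hA.2 a).mkQ_eq_zero, TensorProduct.zero_tmul]
  by_cases hB : 0 < p ∧ i ≤ permFun σ (p - 1)
  · rw [(isDegen_awShRight B h₂ σ hB.1 hB.2 b).mkQ_eq_zero, TensorProduct.tmul_zero]
  obtain rfl : σ = 1 := hσ.eq_one_of_permFun_lt (by omega)
  have hle : 0 < q → i ≤ p := fun hq => by
    simpa [hq, permFun_one (show p < p + q by omega)] using hA
  have hlt : 0 < p → p - 1 < i := fun hp => by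
    simpa [hp, permFun_one (show p - 1 < p + q by omega)] using hB
  exact absurd ⟨by omega, rfl⟩ hne

lemma map_mkQ_awShComp (h₁ : p + q = i + j) (h₂ : q + p = j + i) (a : A.X p) (b : B.X q) :
    TensorProduct.map (degSub A i).mkQ (degSub B j).mkQ (awShComp A B p q i j a b h₁ h₂) =
      ∑ σ with IsShuffle p q σ, ((Equiv.Perm.sign σ : ℤˣ) : ℤ) •
        ((degSub A i).mkQ (awShLeft A h₁ σ a) ⊗ₜ[K] (degSub B j).mkQ (awShRight B h₂ σ b)) := by
  rw [awShComp, ← Finset.sum_filter, map_sum]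
  refine Finset.sum_congr rfl fun σ _ => ?_
  rw [map_zsmul, TensorProduct.map_tmul, awShLeft, awShRight]

end ShuffleTerm

/-- `AW ∘ sh = id` on `N(A) ⊗ N(B)` for the normalized Moore complexes, stated
componentwise: for `a ∈ A_p`, `b ∈ B_q`, every component of `AW(sh(a ⊗ b))` of bidegree
`(i,j) ≠ (p,q)` vanishes in `N(A)_i ⊗ N(B)_j = (A_i/deg) ⊗ (B_j/deg)`, and the
`(p,q)`-component equals the class of `a ⊗ b`. -/
theorem aw_comp_shuffle_eq_id (A B : SimplicialModule K) (p q : ℕ)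
    (a : A.X p) (b : B.X q) :
    (∀ i j : ℕ, ∀ hij : i + j = p + q, ¬(i = p ∧ j = q) →
      TensorProduct.map (degSub A i).mkQ (degSub B j).mkQ
        (awShComp A B p q i j a b (by omega) (by omega)) = 0) ∧
    TensorProduct.map (degSub A p).mkQ (degSub B q).mkQ
        (awShComp A B p q p q a b (by omega) (by omega)) =
      (Submodule.Quotient.mk a) ⊗ₜ[K] (Submodule.Quotient.mk b) := by
  refine ⟨fun i j hij hne => ?_, ?_⟩
  · rw [map_mkQ_awShComp]
    refine Finset.sum_eq_zero fun σ hσ => ?_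
    rw [mkQ_awShLeft_tmul_mkQ_awShRight_eq_zero A B _ _ (Finset.mem_filter.1 hσ).2 (by omega),
      smul_zero]
  · rw [map_mkQ_awShComp, Finset.sum_eq_single_of_mem 1 (by simpa using isShuffle_one p q)]
    · rw [awShLeft_one, awShRight_one, Equiv.Perm.sign_one, Units.val_one, one_smul,
        Submodule.mkQ_apply, Submodule.mkQ_apply]
    · intro σ hσ hσ1
      rw [mkQ_awShLeft_tmul_mkQ_awShRight_eq_zero A B _ _ (Finset.mem_filter.1 hσ).2
        fun h => hσ1 h.2, smul_zero]
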